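/- There exist a real number α > 0 and a natural number k₀ such that for every a ∈ ℝ² lying in the interior of the second quadrant or the interior of the fourth quadrant, and every integer k ≥ k₀, N_k(Σ₁, a) ≤ α·k⁴, where Σ₁ = {A₁, A₂}. -/

import Mathlib

open Matrix Set

noncomputable section

/-- `XSeq S a k` is the set of all vectors `T_{k-1} ⋯ T_0 · a` with each `T_j ∈ S`
(and `XSeq S a 0 = {a}`). -/
def XSeq {n : ℕ} (S : Set (Matrix (Fin n) (Fin n) ℝ)) (a : Fin n → ℝ) : ℕ → Set (Fin n → ℝ)
  | 0 => {a}
  | k + 1 => ⋃ A ∈ S, A.mulVec '' XSeq S a k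

/-- `PHull S a k` is the convex hull of `XSeq S a k`. -/
def PHull {n : ℕ} (S : Set (Matrix (Fin n) (Fin n) ℝ)) (a : Fin n → ℝ) (k : ℕ) :
    Set (Fin n → ℝ) :=
  convexHull ℝ (XSeq S a k)

/-- `EPts S a k` is the set of extreme points of `PHull S a k`. -/
def EPts {n : ℕ} (S : Set (Matrix (Fin n) (Fin n) ℝ)) (a : Fin n → ℝ) (k : ℕ) :
    Set (Fin n → ℝ) :=
  Set.extremePoints ℝ (PHull S a k)

/-- `NExt S a k` is the number of extreme points of `PHull S a k`. -/
def NExt {n : ℕ} (S : Set (Matrix (Fin n) (Fin n) ℝ)) (a : Fin n → ℝ) (k : ℕ) : ℕ :=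
  (EPts S a k).ncard

def M1 : Matrix (Fin 2) (Fin 2) ℝ := !![0, 1; 1, 0]
def M2 : Matrix (Fin 2) (Fin 2) ℝ := !![1, 1; 0, 1]
def M3 : Matrix (Fin 2) (Fin 2) ℝ := !![1, 0; 1, 1]
def M4 : Matrix (Fin 2) (Fin 2) ℝ := !![1, 1; 1, 0]
def M5 : Matrix (Fin 2) (Fin 2) ℝ := !![0, 1; 1, 1]

/-- Interior of the first quadrant. -/
def intQ1 : Set (Fin 2 → ℝ) := {c | 0 < c 0 ∧ 0 < c 1}
/-- Interior of the second quadrant. -/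
def intQ2 : Set (Fin 2 → ℝ) := {c | c 0 < 0 ∧ 0 < c 1}
/-- Interior of the third quadrant. -/
def intQ3 : Set (Fin 2 → ℝ) := {c | c 0 < 0 ∧ c 1 < 0}
/-- Interior of the fourth quadrant. -/
def intQ4 : Set (Fin 2 → ℝ) := {c | 0 < c 0 ∧ c 1 < 0}

/-!
`NExt` is at most the number of points of `XSeq` needed to maximise every linear functional `c`.

Suppose first that `a ≥ 0`. If `c ≥ 0`, only words whose matrix product is entrywise maximal for
their length matter. Grouping letters as `M1 * M2 ^ d`, such a product is one of continued fraction
matrices with digits `d`, and replacing digit blocks by better ones of the same length shows that,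
up to three digits at either end, a maximal word has digits `3, …, 3, v, 3, …, 3` with `v` of length
at most three: there are `O(k)` of these. If `c ≤ 0`, boundedly many points suffice, since every
word of length four dominates one of length two. If `c` lies in the second or fourth quadrant, the
letter applied last in an optimal word is forced, and moving it over to `c` yields a direction with
nonnegative first coordinate; summing over the length gives `O(k ^ 2)`.

For arbitrary `a`, one of `M2 *ᵥ a` and `M2 *ᵥ M1 *ᵥ a` has coordinates of equal sign. Since
`M1 * M1 = 1`, every orbit point other than `M1 ^ k *ᵥ a` arises from one of these two vectors, so
induction costs one more factor `k`.
-/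

/-- `HasSupport Γ X N`: in every direction `c ∈ Γ` the linear functional `c ⬝ᵥ ·` is maximised
over `X` at one of at most `N` points of `X`, chosen independently of `c`. -/
def HasSupport {ι : Type*} [Fintype ι] (Γ X : Set (ι → ℝ)) (N : ℕ) : Prop :=
  ∃ C : Finset (ι → ℝ), ↑C ⊆ X ∧ C.card ≤ N ∧ ∀ c ∈ Γ, ∀ x ∈ X, ∃ y ∈ C, c ⬝ᵥ x ≤ c ⬝ᵥ y

namespace HasSupport

variable {ι : Type*} [Fintype ι] {Γ Γ' X X' : Set (ι → ℝ)} {N N' : ℕ}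

theorem mono (h : HasSupport Γ X N) (hΓ : Γ' ⊆ Γ) (hN : N ≤ N') : HasSupport Γ' X N' := by
  obtain ⟨C, hCX, hCN, hC⟩ := h
  exact ⟨C, hCX, hCN.trans hN, fun c hc ↦ hC c (hΓ hc)⟩

theorem singleton (Γ : Set (ι → ℝ)) (x : ι → ℝ) : HasSupport Γ {x} 1 :=
  ⟨{x}, by simp, by simp, by simp⟩

theorem union_left (h : HasSupport Γ X N) (h' : HasSupport Γ' X N') :
    HasSupport (Γ ∪ Γ') X (N + N') := by
  classical
  obtain ⟨C, hCX, hCN, hC⟩ := h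
  obtain ⟨C', hCX', hCN', hC'⟩ := h'
  refine ⟨C ∪ C', by simp [hCX, hCX'], (C.card_union_le C').trans (by gcongr), ?_⟩
  rintro c (hc | hc) x hx
  · obtain ⟨y, hy, hxy⟩ := hC c hc x hx
    exact ⟨y, Finset.mem_union_left C' hy, hxy⟩
  · obtain ⟨y, hy, hxy⟩ := hC' c hc x hx
    exact ⟨y, Finset.mem_union_right C hy, hxy⟩

theorem union_right (h : HasSupport Γ X N) (h' : HasSupport Γ X' N') :
    HasSupport Γ (X ∪ X') (N + N') := by
  classical
  obtain ⟨C, hCX, hCN, hC⟩ := h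
  obtain ⟨C', hCX', hCN', hC'⟩ := h'
  refine ⟨C ∪ C', by simpa using union_subset_union hCX hCX',
    (C.card_union_le C').trans (by gcongr), ?_⟩
  rintro c hc x (hx | hx)
  · obtain ⟨y, hy, hxy⟩ := hC c hc x hx
    exact ⟨y, Finset.mem_union_left C' hy, hxy⟩
  · obtain ⟨y, hy, hxy⟩ := hC' c hc x hx
    exact ⟨y, Finset.mem_union_right C hy, hxy⟩

theorem image_mulVec {κ : Type*} [Fintype κ] (A : Matrix κ ι ℝ) (h : HasSupport Γ X N) :
    HasSupport {c | c ᵥ* A ∈ Γ} ((A *ᵥ ·) '' X) N := by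
  classical
  obtain ⟨C, hCX, hCN, hC⟩ := h
  refine ⟨C.image (A *ᵥ ·), by simpa using image_mono hCX, Finset.card_image_le.trans hCN, ?_⟩
  rintro c hc _ ⟨x, hx, rfl⟩
  obtain ⟨y, hy, hxy⟩ := hC _ hc x hx
  exact ⟨A *ᵥ y, Finset.mem_image_of_mem _ hy, by simpa only [dotProduct_mulVec] using hxy⟩

theorem neg (h : HasSupport Γ X N) : HasSupport (-Γ) (-X) N := by
  classical
  obtain ⟨C, hCX, hCN, hC⟩ := h
  refine ⟨C.image Neg.neg, ?_, Finset.card_image_le.trans hCN, fun c hc x hx ↦ ?_⟩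
  · simpa only [Finset.coe_image, Set.image_neg_eq_neg, neg_subset_neg] using hCX
  · obtain ⟨y, hy, hxy⟩ := hC (-c) hc (-x) hx
    exact ⟨-y, Finset.mem_image_of_mem _ hy, by simpa using hxy⟩

theorem of_dominating (h : HasSupport Γ X N) (hX : X ⊆ X')
    (hdom : ∀ c ∈ Γ, ∀ x' ∈ X', ∃ x ∈ X, c ⬝ᵥ x' ≤ c ⬝ᵥ x) : HasSupport Γ X' N := by
  obtain ⟨C, hCX, hCN, hC⟩ := h
  refine ⟨C, hCX.trans hX, hCN, fun c hc x' hx' ↦ ?_⟩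
  obtain ⟨x, hx, hle⟩ := hdom c hc x' hx'
  obtain ⟨y, hy, hxy⟩ := hC c hc x hx
  exact ⟨y, hy, hle.trans hxy⟩

theorem ncard_extremePoints_convexHull_le (h : HasSupport univ X N) :
    ((convexHull ℝ X).extremePoints ℝ).ncard ≤ N := by
  classical
  obtain ⟨C, hCX, hCN, hC⟩ := h
  have subset_hull : X ⊆ convexHull ℝ (C : Set (ι → ℝ)) := by
    intro x hx
    by_contra hxC
    obtain ⟨f, u, hfC, hfx⟩ := geometric_hahn_banach_closed_point (convex_convexHull ℝ _)
      (C.finite_toSet.isClosed_convexHull ℝ) hxC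
    set c := (dotProductEquiv ℝ ι).symm f.toLinearMap
    have hcf (z : ι → ℝ) : c ⬝ᵥ z = f z :=
      LinearMap.congr_fun ((dotProductEquiv ℝ ι).apply_symm_apply f.toLinearMap) z
    obtain ⟨y, hy, hxy⟩ := hC c (mem_univ c) x hx
    rw [hcf, hcf] at hxy
    linarith [hfC y (subset_convexHull ℝ _ hy)]
  have hull_eq : convexHull ℝ X = convexHull ℝ (C : Set (ι → ℝ)) :=
    (convexHull_min subset_hull (convex_convexHull ℝ _)).antisymm (convexHull_mono hCX)
  rw [hull_eq]
  calc ((convexHull ℝ (C : Set (ι → ℝ))).extremePoints ℝ).ncard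
      ≤ (C : Set (ι → ℝ)).ncard :=
        ncard_le_ncard extremePoints_convexHull_subset C.finite_toSet
    _ ≤ N := by rwa [ncard_coe_finset]

end HasSupport

/-- The entrywise order on matrices, kept local since Mathlib also has the Loewner order. -/
local instance entrywisePartialOrder {m n α : Type*} [PartialOrder α] :
    PartialOrder (Matrix m n α) :=
  inferInstanceAs (PartialOrder (m → n → α))

local instance entrywiseIsOrderedRing {n α : Type*} [Fintype n] [DecidableEq n] [Semiring α]
    [PartialOrder α] [IsOrderedRing α] : IsOrderedRing (Matrix n n α) where
  add_le_add_left _ _ h C i j := add_le_add_left (h i j) (C i j)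
  zero_le_one i j := by rw [one_apply]; split_ifs <;> simp
  mul_le_mul_of_nonneg_left A hA B C h i j :=
    Finset.sum_le_sum fun k _ ↦ mul_le_mul_of_nonneg_left (h k j) (hA i k)
  mul_le_mul_of_nonneg_right A hA B C h i j :=
    Finset.sum_le_sum fun k _ ↦ mul_le_mul_of_nonneg_right (h i k) (hA k j)

section EntrywiseOrder

variable {m n α : Type*} [PartialOrder α] {A B : Matrix m n α}

theorem transpose_lt_transpose_iff : Aᵀ < Bᵀ ↔ A < B := by
  have le_iff (A B : Matrix m n α) : Aᵀ ≤ Bᵀ ↔ A ≤ B := forall_comm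
  rw [lt_iff_le_not_ge, lt_iff_le_not_ge, le_iff, le_iff]

theorem mulVec_le_mulVec_of_nonneg [Fintype n] [Semiring α] [IsOrderedRing α] (h : A ≤ B)
    {v : n → α} (hv : 0 ≤ v) : A *ᵥ v ≤ B *ᵥ v :=
  fun i ↦ dotProduct_le_dotProduct_of_nonneg_right (h i) hv

end EntrywiseOrder

theorem fin_two_lt_of_trace_lt {α : Type*} [AddCommMonoid α] [PartialOrder α]
    {a b c d a' b' c' d' : α} (ha : a ≤ a') (hb : b ≤ b') (hc : c ≤ c') (hd : d ≤ d')
    (htrace : a + d < a' + d') :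
    !![a, b; c, d] < !![a', b'; c', d'] := by
  refine lt_of_le_of_ne (fun i j ↦ ?_) fun h ↦ htrace.ne ?_
  · fin_cases i <;> fin_cases j <;> assumption
  · simpa [trace_fin_two] using congrArg trace h

theorem mul_mul_lt_mul_mul_of_isUnit {R : Type*} [Semiring R] [PartialOrder R] [IsOrderedRing R]
    {p q a b : R} (hp : 0 ≤ p) (hq : 0 ≤ q) (hp' : IsUnit p) (hq' : IsUnit q) (h : a < b) :
    p * a * q < p * b * q :=
  lt_of_le_of_ne (mul_le_mul_of_nonneg_right (mul_le_mul_of_nonneg_left h.le hp) hq)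
    fun e ↦ h.ne (hp'.mul_left_cancel (hq'.mul_right_cancel e))

theorem lt_of_linear_recurrence {R : Type*} [AddCommMonoid R] [PartialOrder R]
    [IsOrderedCancelAddMonoid R] {f g : ℕ → R} {p : ℕ}
    (hf : ∀ j, f (j + 2) = p • f (j + 1) + f j) (hg : ∀ j, g (j + 2) = p • g (j + 1) + g j)
    (h₀ : f 0 < g 0) (h₁ : f 1 < g 1) (j : ℕ) : f j < g j := by
  induction j using Nat.twoStepInduction with
  | zero => exact h₀
  | one => exact h₁
  | more j ih₀ ih₁ =>
    rw [hf, hg]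
    exact add_lt_add_of_le_of_lt (nsmul_le_nsmul_right ih₁.le p) ih₀

section List

variable {α : Type*}

theorem exists_append_append_isInfix {P c : List α} (h : P <:+: c) (u t : List α) :
    ∃ u' t', u'.length = u.length ∧ t'.length = t.length ∧ u' ++ P ++ t' <:+: u ++ c ++ t := by
  obtain ⟨r, s, rfl⟩ := h
  refine ⟨(u ++ r).drop r.length, (s ++ t).take t.length, by simp, by simp,
    (u ++ r).take r.length, (s ++ t).drop t.length, ?_⟩
  calc (u ++ r).take r.length ++ ((u ++ r).drop r.length ++ P ++ (s ++ t).take t.length) ++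
        (s ++ t).drop t.length
      = ((u ++ r).take r.length ++ (u ++ r).drop r.length) ++ P ++
        ((s ++ t).take t.length ++ (s ++ t).drop t.length) := by simp only [List.append_assoc]
    _ = u ++ (r ++ P ++ s) ++ t := by
      simp only [List.take_append_drop, List.append_assoc]

theorem exists_eq_replicate_append_replicate {x : α} {c : List α}
    (h : ∀ n d d', d :: (List.replicate n x ++ [d']) <:+: c → d ≠ x → d' ≠ x → n = 0) :
    ∃ i j v, x ∉ v ∧ c = List.replicate i x ++ v ++ List.replicate j x := by
  induction c with
  | nil => exact ⟨0, 0, [], by simp, by simp⟩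
  | cons d c ih =>
    obtain ⟨i, j, v, hv, rfl⟩ := ih fun n e e' he ↦ h n e e' (List.infix_cons he)
    by_cases hd : d = x
    · subst hd
      exact ⟨i + 1, j, v, hv, by simp [List.replicate_succ]⟩
    · cases v with
      | nil =>
        exact ⟨0, i + j, [d], by simpa using Ne.symm hd, by simp⟩
      | cons e v =>
        have he : e ≠ x := fun h ↦ hv (by simp [h])
        obtain rfl := h i d e ⟨[], v ++ List.replicate j x, by simp⟩ hd he
        exact ⟨0, j, d :: e :: v, by simpa [Ne.symm hd] using hv, by simp⟩

theorem finite_setOf_length_le_and_forall_le (n b : ℕ) :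
    {l : List ℕ | l.length ≤ n ∧ ∀ d ∈ l, d ≤ b}.Finite := by
  refine ((List.finite_length_le (Fin (b + 1)) n).image (List.map Fin.val)).subset ?_
  rintro l ⟨hl, hlb⟩
  obtain ⟨l', rfl⟩ : l ∈ range (List.map Fin.val) := by
    rw [range_list_map]
    exact fun d hd ↦ ⟨⟨d, Nat.lt_succ_of_le (hlb d hd)⟩, rfl⟩
  exact mem_image_of_mem _ (by simpa using hl)

end List

/-- The digit matrix `[[0, 1], [1, d]] = M1 * M2 ^ d` of continued fractions. -/
def cfMatrix (d : ℕ) : Matrix (Fin 2) (Fin 2) ℝ := !![0, 1; 1, d]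

/-- The product of the digit matrices of `l`; its entries are continuants of `l`. -/
def cfProd (l : List ℕ) : Matrix (Fin 2) (Fin 2) ℝ := (l.map cfMatrix).prod

/-- The number of letters `M1`, `M2` in the word `∏ M1 * M2 ^ d` spelled by the digits `d ∈ l`. -/
def weight (l : List ℕ) : ℕ := (l.map (· + 1)).sum

@[simp]
theorem cfProd_nil : cfProd [] = 1 := rfl

@[simp]
theorem cfProd_cons (d : ℕ) (l : List ℕ) : cfProd (d :: l) = cfMatrix d * cfProd l := by
  simp [cfProd]

@[simp]
theorem cfProd_append (l l' : List ℕ) : cfProd (l ++ l') = cfProd l * cfProd l' := by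
  simp [cfProd]

@[simp]
theorem cfProd_replicate (j d : ℕ) : cfProd (List.replicate j d) = cfMatrix d ^ j := by
  simp [cfProd]

theorem cfProd_reverse (l : List ℕ) : cfProd l.reverse = (cfProd l)ᵀ := by
  have cfMatrix_transpose (d : ℕ) : (cfMatrix d)ᵀ = cfMatrix d := by
    ext i j; fin_cases i <;> fin_cases j <;> rfl
  simp [cfProd, transpose_list_prod, cfMatrix_transpose, Function.comp_def]

theorem cfProd_nonneg (l : List ℕ) : 0 ≤ cfProd l := by
  induction l with
  | nil => exact zero_le_one
  | cons d l ih =>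
    have cfMatrix_nonneg : 0 ≤ cfMatrix d := fun i j ↦ by
      fin_cases i <;> fin_cases j <;> simp [cfMatrix]
    exact (cfProd_cons d l).symm ▸ mul_nonneg cfMatrix_nonneg ih

theorem isUnit_cfProd (l : List ℕ) : IsUnit (cfProd l) := by
  induction l with
  | nil => exact isUnit_one
  | cons d l ih =>
    rw [cfProd_cons]
    exact ((isUnit_iff_isUnit_det _).2 (by simp [cfMatrix])).mul ih

theorem cfMatrix_mul (d : ℕ) (a b c e : ℝ) :
    cfMatrix d * !![a, b; c, e] = !![c, e; a + d * c, b + d * e] := by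
  simp [cfMatrix]

theorem cfMatrix_sq (d : ℕ) : cfMatrix d ^ 2 = d • cfMatrix d + 1 := by
  ext i j
  fin_cases i <;> fin_cases j <;> simp [cfMatrix, sq, add_comm]

@[simp, grind =]
theorem weight_nil : weight [] = 0 := rfl

@[simp, grind =]
theorem weight_cons (d : ℕ) (l : List ℕ) : weight (d :: l) = d + 1 + weight l := by
  simp [weight]

@[simp, grind =]
theorem weight_append (l l' : List ℕ) : weight (l ++ l') = weight l + weight l' := by
  simp [weight]

@[simp, grind =]
theorem weight_replicate (j d : ℕ) : weight (List.replicate j d) = j * (d + 1) := by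
  simp [weight]

@[simp, grind =]
theorem weight_reverse (l : List ℕ) : weight l.reverse = weight l := by
  simp [weight]

theorem finite_setOf_weight_eq (m : ℕ) : {l | weight l = m}.Finite := by
  let toComposition (l : {l | weight l = m}) : Composition m :=
    ⟨l.1.map (· + 1), by simp, l.2⟩
  refine Finite.of_injective toComposition fun l l' h ↦ Subtype.ext ?_
  exact List.map_injective_iff.2 (add_left_injective 1) (congrArg Composition.blocks h)

/-- A digit list is undominated if no digit list of the same weight has an entrywise larger
product. -/
def IsUndominated (l : List ℕ) : Prop := MaximalFor (weight · = weight l) cfProd l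

theorem exists_isUndominated_ge (l : List ℕ) :
    ∃ l', IsUndominated l' ∧ weight l' = weight l ∧ cfProd l ≤ cfProd l' := by
  obtain ⟨_, hle, ⟨l', hl', rfl⟩, hmax⟩ :=
    ((finite_setOf_weight_eq (weight l)).image cfProd).exists_le_maximal
      ⟨l, rfl, rfl⟩
  exact ⟨l', ⟨rfl, fun l'' hl'' ↦ hmax ⟨l'', hl''.trans hl', rfl⟩⟩, hl', hle⟩

theorem cfProd_pow_lt {d : ℕ} {p q p' q' : List ℕ} (h₀ : cfProd (p ++ q) < cfProd (p' ++ q'))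
    (h₁ : cfProd (p ++ d :: q) < cfProd (p' ++ d :: q')) (j : ℕ) :
    cfProd (p ++ (List.replicate j d ++ q)) < cfProd (p' ++ (List.replicate j d ++ q')) := by
  have recurrence (p q : List ℕ) (j : ℕ) : cfProd (p ++ (List.replicate (j + 2) d ++ q)) =
      d • cfProd (p ++ (List.replicate (j + 1) d ++ q)) +
        cfProd (p ++ (List.replicate j d ++ q)) := by
    simp only [cfProd_append, cfProd_replicate, pow_add, cfMatrix_sq, pow_one, add_mul, mul_add,
      smul_mul_assoc, mul_smul_comm, mul_one]
  exact lt_of_linear_recurrence (f := fun j ↦ cfProd (p ++ (List.replicate j d ++ q)))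
    (g := fun j ↦ cfProd (p' ++ (List.replicate j d ++ q'))) (recurrence p q) (recurrence p' q')
    (by simpa using h₀) (by simpa using h₁) j

theorem cfProd_add_five_lt (a : ℕ) : cfProd [a + 5] < cfProd [2, a + 2] := by
  simp only [cfProd_cons, cfProd_nil, one_fin_two, cfMatrix_mul]
  apply fin_two_lt_of_trace_lt <;> push_cast <;> linarith

theorem cfProd_zero_lt (x y : ℕ) : cfProd [x, 0, y] < cfProd [x + y + 2] := by
  simp only [cfProd_cons, cfProd_nil, one_fin_two, cfMatrix_mul]
  apply fin_two_lt_of_trace_lt <;> push_cast <;> linarith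

theorem cfProd_one_lt (x y : ℕ) : cfProd [x, 1, y] < cfProd [x + 1, y + 1] := by
  simp only [cfProd_cons, cfProd_nil, one_fin_two, cfMatrix_mul]
  apply fin_two_lt_of_trace_lt <;> push_cast <;> linarith

theorem cfProd_four_threes_four_lt (j : ℕ) :
    cfProd ([4] ++ (List.replicate j 3 ++ [4])) <
      cfProd ([3] ++ (List.replicate j 3 ++ [2, 2])) := by
  refine cfProd_pow_lt ?_ ?_ j <;>
    simp only [List.cons_append, List.nil_append, cfProd_cons, cfProd_nil, one_fin_two,
      cfMatrix_mul] <;>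
    apply fin_two_lt_of_trace_lt <;> push_cast <;> nlinarith

theorem cfProd_four_threes_two_lt {y : ℕ} (hy : 2 ≤ y) (j : ℕ) :
    cfProd ([4] ++ (List.replicate j 3 ++ [2, y])) <
      cfProd ([3] ++ (List.replicate j 3 ++ [3, y])) := by
  have hy' : (2 : ℝ) ≤ y := by exact_mod_cast hy
  refine cfProd_pow_lt ?_ ?_ j <;>
    simp only [List.cons_append, List.nil_append, cfProd_cons, cfProd_nil, one_fin_two,
      cfMatrix_mul] <;>
    apply fin_two_lt_of_trace_lt <;> push_cast <;> nlinarith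

theorem cfProd_two_three_threes_two_lt {x y : ℕ} (hx : 3 ≤ x) (hy : 1 ≤ y) (j : ℕ) :
    cfProd ([x, 2, 3] ++ (List.replicate j 3 ++ [2, y])) <
      cfProd ([x, 3] ++ (List.replicate j 3 ++ [2, 2, y])) := by
  have hx' : (3 : ℝ) ≤ x := by exact_mod_cast hx
  have hy' : (1 : ℝ) ≤ y := by exact_mod_cast hy
  refine cfProd_pow_lt ?_ ?_ j <;>
    simp only [List.cons_append, List.nil_append, cfProd_cons, cfProd_nil, one_fin_two,
      cfMatrix_mul] <;>
    apply fin_two_lt_of_trace_lt <;> push_cast <;> nlinarith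

theorem cfProd_two_two_threes_two_two_lt {x y : ℕ} (hx : 2 ≤ x) (hy : 2 ≤ y) (j : ℕ) :
    cfProd ([x, 2, 2] ++ (List.replicate j 3 ++ [2, 2, y])) <
      cfProd ([x, 3, 3] ++ (List.replicate j 3 ++ [3, y])) := by
  have hx' : (2 : ℝ) ≤ x := by exact_mod_cast hx
  have hy' : (2 : ℝ) ≤ y := by exact_mod_cast hy
  refine cfProd_pow_lt ?_ ?_ j <;>
    simp only [List.cons_append, List.nil_append, cfProd_cons, cfProd_nil, one_fin_two,
      cfMatrix_mul] <;>
    apply fin_two_lt_of_trace_lt <;> push_cast <;> nlinarith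

namespace IsUndominated

variable {l : List ℕ}

theorem not_cfProd_lt (h : IsUndominated l) {l' : List ℕ} (hw : weight l' = weight l) :
    ¬ cfProd l < cfProd l' :=
  h.not_gt hw

theorem of_infix (h : IsUndominated l) {l' : List ℕ} (hl' : l' <:+: l) : IsUndominated l' := by
  obtain ⟨p, q, rfl⟩ := hl'
  refine ⟨rfl, fun m hm hle ↦ ?_⟩
  by_contra hnle
  refine h.not_cfProd_lt (l' := p ++ m ++ q) (by simp [hm]) ?_
  simpa [mul_assoc] using mul_mul_lt_mul_mul_of_isUnit (cfProd_nonneg p) (cfProd_nonneg q)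
    (isUnit_cfProd p) (isUnit_cfProd q) (lt_of_le_not_ge hle hnle)

theorem reverse (h : IsUndominated l) : IsUndominated l.reverse := by
  refine ⟨rfl, fun m hm hle ↦ ?_⟩
  by_contra hnle
  refine h.not_cfProd_lt (l' := m.reverse) (by simpa using hm) ?_
  rw [← transpose_lt_transpose_iff, ← cfProd_reverse, ← cfProd_reverse, List.reverse_reverse]
  exact lt_of_le_not_ge hle hnle

theorem le_four (h : IsUndominated l) {d : ℕ} (hd : d ∈ l) : d ≤ 4 := by
  by_contra! hd5
  obtain ⟨a, rfl⟩ := Nat.exists_eq_add_of_le' hd5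
  obtain ⟨p, q, hpq⟩ := List.append_of_mem hd
  exact (h.of_infix ⟨p, q, by simp [hpq]⟩).not_cfProd_lt (by grind) (cfProd_add_five_lt a)

theorem two_le (h : IsUndominated l) {x d y : ℕ} (hl : [x, d, y] <:+: l) : 2 ≤ d := by
  have h' := h.of_infix hl
  by_contra! hd
  interval_cases d
  · exact h'.not_cfProd_lt (by grind) (cfProd_zero_lt x y)
  · exact h'.not_cfProd_lt (by grind) (cfProd_one_lt x y)

theorem not_four_threes (n : ℕ) {d y : ℕ} (hd : d ≠ 3) (hd2 : 2 ≤ d) (hy : 2 ≤ y) :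
    ¬ IsUndominated (4 :: (List.replicate n 3 ++ [d, y])) := by
  intro h
  have hd4 : d ≤ 4 := h.le_four (by simp)
  interval_cases d
  · exact h.not_cfProd_lt (by grind) (cfProd_four_threes_two_lt hy n)
  · exact hd rfl
  · refine (h.of_infix ⟨[], [y], by simp⟩).not_cfProd_lt ?_ (cfProd_four_threes_four_lt n)
    grind

theorem not_two_threes_two (n : ℕ) {x' x y y' : ℕ} (hx' : 2 ≤ x') (hx : 2 ≤ x)
    (hy : 2 ≤ y) (hy' : 2 ≤ y') :
    ¬ IsUndominated ([x', x, 2] ++ (List.replicate (n + 1) 3 ++ [2, y, y'])) := by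
  intro h
  obtain rfl | hx3 := hx.eq_or_lt
  · obtain rfl | hy3 := hy.eq_or_lt
    · exact h.not_cfProd_lt (by grind) (cfProd_two_two_threes_two_two_lt hx' hy' (n + 1))
    · refine (h.reverse.of_infix (l' := [y, 2, 3] ++ (List.replicate n 3 ++ [2, 2]))
        ⟨[y'], [x'], ?_⟩).not_cfProd_lt ?_ (cfProd_two_three_threes_two_lt hy3 one_le_two n)
      · simp [List.replicate_succ']
      · grind
  · refine (h.of_infix (l' := [x, 2, 3] ++ (List.replicate n 3 ++ [2, y]))
        ⟨[x'], [y'], ?_⟩).not_cfProd_lt ?_ (cfProd_two_three_threes_two_lt hx3 (by omega) n)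
    · simp [List.replicate_succ]
    · grind

theorem not_twos {x y : ℕ} (hx : 2 ≤ x) (hy : 2 ≤ y) : ¬ IsUndominated [x, 2, 2, 2, 2, y] :=
  fun h ↦ h.not_cfProd_lt (by grind) (cfProd_two_two_threes_two_two_lt hx hy 0)

theorem two_le_of_append {w x' x d : ℕ} {q : List ℕ} (h : IsUndominated ([w, x', x, d] ++ q))
    (hq : q ≠ []) : 2 ≤ x' ∧ 2 ≤ x ∧ 2 ≤ d := by
  obtain ⟨e, q, rfl⟩ := List.exists_cons_of_ne_nil hq
  exact ⟨h.two_le (x := w) (y := x) ⟨[], d :: e :: q, rfl⟩,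
    h.two_le (x := x') (y := d) ⟨[w], e :: q, rfl⟩, h.two_le (x := x) (y := e) ⟨[w, x'], q, rfl⟩⟩

theorem threes_between {n w x' x d d' y y' z : ℕ}
    (h : IsUndominated ([w, x', x, d] ++ (List.replicate n 3 ++ [d', y, y', z])))
    (hd : d ≠ 3) (hd' : d' ≠ 3) : n = 0 ∧ d = 2 ∧ d' = 2 := by
  have hrev : IsUndominated ([z, y', y, d'] ++ (List.replicate n 3 ++ [d, x, x', w])) := by
    simpa using h.reverse
  obtain ⟨hx', hx, hd2⟩ := h.two_le_of_append (by simp)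
  obtain ⟨hy', hy, hd2'⟩ := hrev.two_le_of_append (by simp)
  have d_ne : d ≠ 4 := by
    rintro rfl
    exact not_four_threes n hd' hd2' hy (h.of_infix ⟨[w, x', x], [y', z], by simp⟩)
  have d'_ne : d' ≠ 4 := by
    rintro rfl
    exact not_four_threes n hd hd2 hx (hrev.of_infix ⟨[z, y', y], [x', w], by simp⟩)
  have d_le : d ≤ 4 := h.le_four (by simp)
  have d'_le : d' ≤ 4 := h.le_four (by simp)
  obtain rfl : d = 2 := by omega
  obtain rfl : d' = 2 := by omega
  refine ⟨?_, rfl, rfl⟩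
  by_contra hn
  obtain ⟨n, rfl⟩ := Nat.exists_eq_succ_of_ne_zero hn
  exact not_two_threes_two n hx' hx hy hy' (h.of_infix ⟨[w], [z], by simp⟩)

section Core

variable {u c t : List ℕ}

theorem threes_between_of_isInfix (h : IsUndominated (u ++ c ++ t)) (hu : u.length = 3)
    (ht : t.length = 3) {n d d' : ℕ} (hc : d :: (List.replicate n 3 ++ [d']) <:+: c) (hd : d ≠ 3)
    (hd' : d' ≠ 3) : n = 0 ∧ d = 2 ∧ d' = 2 := by
  obtain ⟨u', t', hu', ht', hinf⟩ := exists_append_append_isInfix hc u t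
  obtain ⟨w, x', x, rfl⟩ := List.length_eq_three.1 (hu'.trans hu)
  obtain ⟨y, y', z, rfl⟩ := List.length_eq_three.1 (ht'.trans ht)
  exact threes_between (by simpa using h.of_infix hinf) hd hd'

theorem not_twos_isInfix (h : IsUndominated (u ++ c ++ t)) (hu : u.length = 3)
    (ht : t.length = 3) : ¬ [2, 2, 2, 2] <:+: c := by
  intro hc
  obtain ⟨u', t', hu', ht', hinf⟩ := exists_append_append_isInfix hc u t
  obtain ⟨w, x', x, rfl⟩ := List.length_eq_three.1 (hu'.trans hu)
  obtain ⟨y, y', z, rfl⟩ := List.length_eq_three.1 (ht'.trans ht)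
  have h' := h.of_infix hinf
  exact not_twos (h'.two_le (x := x') (y := 2) ⟨[w], [2, 2, 2, y, y', z], rfl⟩)
    (h'.two_le (x := 2) (y := y') ⟨[w, x', x, 2, 2, 2], [z], rfl⟩)
    (h'.of_infix ⟨[w, x'], [y', z], rfl⟩)

theorem length_le_three_of_three_notMem (h : IsUndominated (u ++ c ++ t)) (hu : u.length = 3)
    (ht : t.length = 3) {v : List ℕ} (hv : v <:+: c) (hv3 : 3 ∉ v) : v.length ≤ 3 := by
  have eq_two {d d' : ℕ} (hdd' : [d, d'] <:+: v) : d = 2 ∧ d' = 2 :=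
    (h.threes_between_of_isInfix hu ht (n := 0) (hdd'.trans hv)
      (fun hd ↦ hv3 (hdd'.subset (by simp [hd]))) fun hd' ↦ hv3 (hdd'.subset (by simp [hd']))).2
  match v with
  | [] | [_] | [_, _] | [_, _, _] => simp
  | d₀ :: d₁ :: d₂ :: d₃ :: v =>
    obtain ⟨rfl, rfl⟩ := eq_two (d := d₀) (d' := d₁) ⟨[], d₂ :: d₃ :: v, rfl⟩
    obtain ⟨rfl, rfl⟩ := eq_two (d := d₂) (d' := d₃) ⟨[2, 2], v, rfl⟩
    exact absurd (.trans ⟨[], v, rfl⟩ hv) (h.not_twos_isInfix hu ht)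

end Core

theorem exists_eq_append_threes (h : IsUndominated l) :
    ∃ u v t i j, u.length ≤ 3 ∧ v.length ≤ 3 ∧ t.length ≤ 3 ∧
      l = u ++ (List.replicate i 3 ++ v ++ List.replicate j 3) ++ t := by
  obtain hl | hl := lt_or_ge l.length 6
  · exact ⟨l.take 3, l.drop 3, [], 0, 0, by simp, by grind, by simp, by simp⟩
  · obtain ⟨u, c, t, hu, ht, rfl⟩ : ∃ u c t, u.length = 3 ∧ t.length = 3 ∧ l = u ++ c ++ t :=
      ⟨l.take 3, (l.drop 3).take (l.length - 6), (l.drop 3).drop (l.length - 6),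
        by grind, by grind,
        by rw [List.append_assoc, List.take_append_drop, List.take_append_drop]⟩
    obtain ⟨i, j, v, hv3, rfl⟩ := exists_eq_replicate_append_replicate fun n d d' hc hd hd' ↦
      (h.threes_between_of_isInfix hu ht hc hd hd').1
    exact ⟨u, v, t, i, j, hu.le,
      h.length_le_three_of_three_notMem hu ht ⟨_, _, rfl⟩ hv3, ht.le, rfl⟩

end IsUndominated

theorem exists_ncard_isUndominated_le :
    ∃ K, ∀ m, {l | IsUndominated l ∧ weight l = m}.ncard ≤ K * (m + 1) := by
  let short : Set (List ℕ) := {l | l.length ≤ 3 ∧ ∀ d ∈ l, d ≤ 4}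
  have short_finite : short.Finite := finite_setOf_length_le_and_forall_le 3 4
  let build (m : ℕ) : (List ℕ × List ℕ × List ℕ) × ℕ → List ℕ := fun ⟨⟨u, v, t⟩, i⟩ ↦
    u ++ (List.replicate i 3 ++ v ++
      List.replicate ((m - weight (u ++ v ++ t)) / 4 - i) 3) ++ t
  refine ⟨(short ×ˢ short ×ˢ short).ncard, fun m ↦ ?_⟩
  have subset_image : {l | IsUndominated l ∧ weight l = m} ⊆
      build m '' ((short ×ˢ short ×ˢ short) ×ˢ Iio (m + 1)) := by
    rintro l ⟨hl, hm⟩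
    obtain ⟨u, v, t, i, j, hu, hv, ht, rfl⟩ := hl.exists_eq_append_threes
    have isShort {w : List ℕ} (hw : w.length ≤ 3)
        (hwl : ∀ d ∈ w, d ∈ u ++ (List.replicate i 3 ++ v ++ List.replicate j 3) ++ t) :
        w ∈ short :=
      ⟨hw, fun d hd ↦ hl.le_four (hwl d hd)⟩
    simp only [weight_append, weight_replicate] at hm
    refine ⟨((u, v, t), i), ⟨⟨isShort hu (by simp +contextual), isShort hv (by simp +contextual),
      isShort ht (by simp +contextual)⟩, by grind⟩, ?_⟩
    have hj : (m - weight (u ++ v ++ t)) / 4 - i = j := by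
      simp only [weight_append]
      omega
    simp only [build, hj]
  calc _ ≤ (build m '' ((short ×ˢ short ×ˢ short) ×ˢ Iio (m + 1))).ncard :=
        ncard_le_ncard subset_image (((short_finite.prod (short_finite.prod short_finite)).prod
          (finite_Iio _)).image _)
    _ ≤ ((short ×ˢ short ×ˢ short) ×ˢ Iio (m + 1)).ncard := ncard_image_le
          ((short_finite.prod (short_finite.prod short_finite)).prod (finite_Iio _))
    _ = _ := by simp [ncard_prod]

section XSeq

variable {n : ℕ} {S : Set (Matrix (Fin n) (Fin n) ℝ)}

theorem XSeq_pair_succ (A B : Matrix (Fin n) (Fin n) ℝ) (a : Fin n → ℝ) (k : ℕ) :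
    XSeq {A, B} a (k + 1) = (A *ᵥ ·) '' XSeq {A, B} a k ∪ (B *ᵥ ·) '' XSeq {A, B} a k := by
  rw [XSeq, biUnion_pair]

theorem XSeq_pair_succ' (A B : Matrix (Fin n) (Fin n) ℝ) (a : Fin n → ℝ) (k : ℕ) :
    XSeq {A, B} a (k + 1) = XSeq {A, B} (A *ᵥ a) k ∪ XSeq {A, B} (B *ᵥ a) k := by
  induction k with
  | zero => rw [XSeq_pair_succ]; simp [XSeq]
  | succ k ih =>
    rw [XSeq_pair_succ, ih, XSeq_pair_succ, XSeq_pair_succ, image_union, image_union,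
      union_union_union_comm]

theorem mem_XSeq_succ {a x : Fin n → ℝ} {k : ℕ} :
    x ∈ XSeq S a (k + 1) ↔ ∃ A ∈ S, ∃ y ∈ XSeq S a k, A *ᵥ y = x := by
  simp [XSeq]

theorem mulVec_mem_XSeq_succ {A : Matrix (Fin n) (Fin n) ℝ} (hA : A ∈ S) {a x : Fin n → ℝ} {k : ℕ}
    (hx : x ∈ XSeq S a k) : A *ᵥ x ∈ XSeq S a (k + 1) :=
  mem_XSeq_succ.2 ⟨A, hA, x, hx, rfl⟩

theorem XSeq_neg (S : Set (Matrix (Fin n) (Fin n) ℝ)) (a : Fin n → ℝ) (k : ℕ) :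
    XSeq S (-a) k = -XSeq S a k := by
  induction k with
  | zero => simp [XSeq]
  | succ k ih =>
    simp only [XSeq, ih, ← Set.image_neg_eq_neg, image_iUnion, image_image, mulVec_neg]

theorem nonneg_of_mem_XSeq (hS : ∀ A ∈ S, 0 ≤ A) {a : Fin n → ℝ} (ha : 0 ≤ a) {k : ℕ} :
    ∀ x ∈ XSeq S a k, 0 ≤ x := by
  induction k with
  | zero => rintro x rfl; exact ha
  | succ k ih =>
    intro _ hx
    obtain ⟨A, hA, y, hy, rfl⟩ := mem_XSeq_succ.1 hx
    simpa using mulVec_le_mulVec_of_nonneg (hS A hA) (ih y hy)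

theorem hasSupport_XSeq_pair (A B : Matrix (Fin n) (Fin n) ℝ) (a : Fin n → ℝ) (k : ℕ) :
    HasSupport univ (XSeq {A, B} a k) (2 ^ k) := by
  induction k with
  | zero => exact .singleton univ a
  | succ k ih =>
    rw [XSeq_pair_succ, pow_succ, mul_two]
    exact (ih.image_mulVec A).union_right (ih.image_mulVec B)

end XSeq

theorem M1_mulVec (x : Fin 2 → ℝ) : M1 *ᵥ x = ![x 1, x 0] := by
  ext i; fin_cases i <;> simp [M1, vecHead, vecTail]

theorem M2_mulVec (x : Fin 2 → ℝ) : M2 *ᵥ x = ![x 0 + x 1, x 1] := by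
  ext i; fin_cases i <;> simp [M2, vecHead, vecTail]

theorem vecMul_M1 (c : Fin 2 → ℝ) : c ᵥ* M1 = ![c 1, c 0] := by
  ext i; fin_cases i <;> simp [M1, vecMul, dotProduct]

theorem vecMul_M2 (c : Fin 2 → ℝ) : c ᵥ* M2 = ![c 0, c 0 + c 1] := by
  ext i; fin_cases i <;> simp [M2, vecMul, dotProduct]

theorem M1_mul_M1 : M1 * M1 = 1 := by
  simp [M1, one_fin_two]

theorem nonneg_of_mem_M1_M2 : ∀ T ∈ ({M1, M2} : Set _), 0 ≤ T := by
  rintro T (rfl | rfl) i j <;> fin_cases i <;> fin_cases j <;> simp [M1, M2]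

theorem XSeq_subset_XSeq_add_two (a : Fin 2 → ℝ) (k : ℕ) :
    XSeq {M1, M2} a k ⊆ XSeq {M1, M2} a (k + 2) := fun x hx ↦ by
  have h := mulVec_mem_XSeq_succ (mem_insert M1 {M2}) (mulVec_mem_XSeq_succ (mem_insert M1 {M2}) hx)
  rwa [mulVec_mulVec, M1_mul_M1, one_mulVec] at h

theorem M1_mul_cfMatrix_zero : M1 * cfMatrix 0 = 1 := by
  simp [M1, cfMatrix, one_fin_two]

theorem M1_mul_cfMatrix_succ (d : ℕ) : M1 * cfMatrix (d + 1) = M2 * (M1 * cfMatrix d) := by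
  simp [M1, M2, cfMatrix, add_comm]

/-- The leading `M1` cancels the first letter of the word, hence the weight `k + 1`. -/
theorem cfProd_mem_XSeq (b : Fin 2 → ℝ) {k : ℕ} {l : List ℕ} (hl : weight l = k + 1) :
    (M1 * cfProd l) *ᵥ b ∈ XSeq {M1, M2} b k := by
  induction k generalizing l with
  | zero =>
    obtain rfl : l = [0] := by
      match l with
      | [d] => simpa using hl
      | _ :: _ :: _ => rw [weight_cons, weight_cons] at hl; omega
    simp [M1_mul_cfMatrix_zero, XSeq]
  | succ k ih =>
    match l with
    | 0 :: l =>
      have hl' : weight l = k + 1 := by rw [weight_cons] at hl; omega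
      have h := mulVec_mem_XSeq_succ (mem_insert M1 {M2}) (ih hl')
      rw [cfProd_cons, ← mul_assoc, M1_mul_cfMatrix_zero]
      rwa [mulVec_mulVec, ← mul_assoc, M1_mul_M1] at h
    | (d + 1) :: l =>
      have hl' : weight (d :: l) = k + 1 := by rw [weight_cons] at hl ⊢; omega
      have h := mulVec_mem_XSeq_succ (mem_insert_of_mem M1 (mem_singleton M2)) (ih hl')
      rw [cfProd_cons, ← mul_assoc, M1_mul_cfMatrix_succ]
      rwa [mulVec_mulVec, cfProd_cons, ← mul_assoc M1, ← mul_assoc M2] at h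

theorem exists_cfProd_of_mem_XSeq {b x : Fin 2 → ℝ} {k : ℕ} (hx : x ∈ XSeq {M1, M2} b k) :
    ∃ l, weight l = k + 1 ∧ x = (M1 * cfProd l) *ᵥ b := by
  induction k generalizing x with
  | zero =>
    obtain rfl : x = b := hx
    exact ⟨[0], by simp, by simp [M1_mul_cfMatrix_zero]⟩
  | succ k ih =>
    rw [XSeq_pair_succ] at hx
    obtain ⟨y, hy, rfl⟩ | ⟨y, hy, rfl⟩ := hx <;> obtain ⟨l, hl, rfl⟩ := ih hy
    · refine ⟨0 :: l, by simp [hl, add_comm], ?_⟩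
      change M1 *ᵥ _ = _
      rw [mulVec_mulVec, cfProd_cons, ← mul_assoc, ← mul_assoc, M1_mul_M1, M1_mul_cfMatrix_zero]
    · match l with
      | d :: l =>
        refine ⟨(d + 1) :: l, by rw [weight_cons] at hl ⊢; omega, ?_⟩
        change M2 *ᵥ _ = _
        rw [mulVec_mulVec, cfProd_cons, cfProd_cons, ← mul_assoc, ← mul_assoc, mul_assoc M2,
          ← M1_mul_cfMatrix_succ, mul_assoc]

theorem exists_hasSupport_Ici : ∃ K, ∀ b : Fin 2 → ℝ, 0 ≤ b → ∀ k,
    HasSupport (Ici 0) (XSeq {M1, M2} b k) (K * (k + 2)) := by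
  classical
  obtain ⟨K, hK⟩ := exists_ncard_isUndominated_le
  refine ⟨K, fun b hb k ↦ ?_⟩
  have undominated_finite : {l | IsUndominated l ∧ weight l = k + 1}.Finite :=
    (finite_setOf_weight_eq (k + 1)).subset fun _ hl ↦ hl.2
  refine ⟨undominated_finite.toFinset.image fun l ↦ (M1 * cfProd l) *ᵥ b, ?_, ?_, ?_⟩
  · simp only [Finset.coe_image, Finite.coe_toFinset, image_subset_iff]
    exact fun l hl ↦ cfProd_mem_XSeq b hl.2
  · refine Finset.card_image_le.trans ?_
    rw [← ncard_eq_toFinset_card _ undominated_finite]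
    exact hK (k + 1)
  · intro c hc x hx
    obtain ⟨l, hl, rfl⟩ := exists_cfProd_of_mem_XSeq hx
    obtain ⟨l', hl', hw, hle⟩ := exists_isUndominated_ge l
    refine ⟨_, Finset.mem_image_of_mem _ (by simpa using ⟨hl', hw.trans hl⟩), ?_⟩
    have M1_mul_le : M1 * cfProd l ≤ M1 * cfProd l' :=
      mul_le_mul_of_nonneg_left hle (nonneg_of_mem_M1_M2 M1 (.inl rfl))
    exact dotProduct_le_dotProduct_of_nonneg_left (mulVec_le_mulVec_of_nonneg M1_mul_le hb) hc

theorem exists_mul_le_mul_mul_mul {A B C D : Matrix (Fin 2) (Fin 2) ℝ}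
    (hA : A ∈ ({M1, M2} : Set _)) (hB : B ∈ ({M1, M2} : Set _)) (hC : C ∈ ({M1, M2} : Set _))
    (hD : D ∈ ({M1, M2} : Set _)) :
    ∃ E ∈ ({M1, M2} : Set _), ∃ F ∈ ({M1, M2} : Set _), E * F ≤ A * (B * (C * D)) := by
  have nonneg {T} (hT : T ∈ ({M1, M2} : Set _)) : 0 ≤ T := nonneg_of_mem_M1_M2 T hT
  have le_sq_mul {T P} (hT : T ∈ ({M1, M2} : Set _)) (hP : 0 ≤ P) : P ≤ T * (T * P) := by
    rw [← mul_assoc]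
    refine le_mul_of_one_le_left hP ?_
    obtain rfl | rfl := hT
    · exact M1_mul_M1.ge
    · intro i j
      fin_cases i <;> fin_cases j <;> simp [M2]
  have alternating : M1 * M2 ≤ M1 * (M2 * (M1 * M2)) ∧ M2 * M1 ≤ M2 * (M1 * (M2 * M1)) := by
    constructor <;> intro i j <;> fin_cases i <;> fin_cases j <;> simp [M1, M2]
  obtain rfl | hAB := eq_or_ne A B
  · exact ⟨C, hC, D, hD, le_sq_mul hA (mul_nonneg (nonneg hC) (nonneg hD))⟩
  obtain rfl | hBC := eq_or_ne B C
  · exact ⟨A, hA, D, hD, mul_le_mul_of_nonneg_left (le_sq_mul hB (nonneg hD)) (nonneg hA)⟩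
  obtain rfl | hCD := eq_or_ne C D
  · refine ⟨A, hA, B, hB, mul_le_mul_of_nonneg_left ?_ (nonneg hA)⟩
    simpa using mul_le_mul_of_nonneg_left (le_sq_mul hC zero_le_one) (nonneg hB)
  refine ⟨A, hA, B, hB, ?_⟩
  obtain rfl | rfl := hA <;> obtain rfl | rfl := hB <;> obtain rfl | rfl := hC <;>
    obtain rfl | rfl := hD <;> first | contradiction | exact alternating.1 | exact alternating.2

theorem hasSupport_Iic {b : Fin 2 → ℝ} (hb : 0 ≤ b) (k : ℕ) :
    HasSupport (Iic 0) (XSeq {M1, M2} b k) 8 := by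
  induction k using Nat.strong_induction_on with
  | h k ih =>
    obtain hk | hk := lt_or_ge k 4
    · exact (hasSupport_XSeq_pair M1 M2 b k).mono (subset_univ _)
        (Nat.pow_le_pow_right two_pos (Nat.le_of_lt_succ hk))
    obtain ⟨k, rfl⟩ := Nat.exists_eq_add_of_le' hk
    refine (ih (k + 2) (by omega)).of_dominating (XSeq_subset_XSeq_add_two b (k + 2)) ?_
    intro c hc _ hx
    obtain ⟨A, hA, _, hAx, rfl⟩ := mem_XSeq_succ.1 hx
    obtain ⟨B, hB, _, hBx, rfl⟩ := mem_XSeq_succ.1 hAx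
    obtain ⟨C, hC, _, hCx, rfl⟩ := mem_XSeq_succ.1 hBx
    obtain ⟨D, hD, x, hDx, rfl⟩ := mem_XSeq_succ.1 hCx
    obtain ⟨E, hE, F, hF, hle⟩ := exists_mul_le_mul_mul_mul hA hB hC hD
    refine ⟨E *ᵥ F *ᵥ x, mulVec_mem_XSeq_succ hE (mulVec_mem_XSeq_succ hF hDx), ?_⟩
    have hx₀ : 0 ≤ x := nonneg_of_mem_XSeq nonneg_of_mem_M1_M2 hb x hDx
    simp only [mulVec_mulVec]
    rw [← neg_le_neg_iff, ← neg_dotProduct, ← neg_dotProduct]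
    exact dotProduct_le_dotProduct_of_nonneg_left (mulVec_le_mulVec_of_nonneg hle hx₀)
      (neg_nonneg.2 hc)

theorem HasSupport.setOf_fourth_quadrant {b : Fin 2 → ℝ} (hb : 0 ≤ b) {k N : ℕ}
    (h : HasSupport {c | 0 ≤ c 0} (XSeq {M1, M2} b (k + 1)) N) :
    HasSupport {c | 0 ≤ c 0 ∧ c 1 ≤ 0} (XSeq {M1, M2} b (k + 2)) N := by
  have direction_mem (c : Fin 2 → ℝ) (hc : 0 ≤ c 0 ∧ c 1 ≤ 0) : c ᵥ* M2 ∈ {c | 0 ≤ c 0} := by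
    rw [vecMul_M2]
    exact hc.1
  refine ((h.image_mulVec M2).mono direction_mem le_rfl).of_dominating
    (XSeq_pair_succ M1 M2 b (k + 1) ▸ subset_union_right) ?_
  rintro c ⟨hc₀, hc₁⟩ _ hx
  obtain ⟨_, rfl | rfl, y, hy, rfl⟩ := mem_XSeq_succ.1 hx
  · obtain ⟨A, hA, z, hz, rfl⟩ := mem_XSeq_succ.1 hy
    have hz₀ : 0 ≤ z := nonneg_of_mem_XSeq nonneg_of_mem_M1_M2 hb z hz
    have M2_M2_maximal : c ⬝ᵥ M1 *ᵥ A *ᵥ z ≤ c ⬝ᵥ M2 *ᵥ M2 *ᵥ z := by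
      have h₀₀ := mul_nonneg hc₀ (hz₀ 0)
      have h₀₁ := mul_nonneg hc₀ (hz₀ 1)
      have h₁₀ := mul_nonneg (neg_nonneg.2 hc₁) (hz₀ 0)
      obtain rfl | rfl := hA <;> simp only [M1_mulVec, M2_mulVec, dotProduct, Fin.sum_univ_two,
        cons_val_zero, cons_val_one] <;> linarith
    exact ⟨_, mem_image_of_mem _ (mulVec_mem_XSeq_succ (.inr rfl) hz), M2_M2_maximal⟩
  · exact ⟨_, mem_image_of_mem _ hy, le_rfl⟩

theorem HasSupport.setOf_second_quadrant {b : Fin 2 → ℝ} (hb : 0 ≤ b) {k N : ℕ}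
    (h : HasSupport {c | 0 ≤ c 0} (XSeq {M1, M2} b (k + 1)) N) :
    HasSupport {c | c 0 ≤ 0 ∧ 0 ≤ c 1} (XSeq {M1, M2} b (k + 2)) N := by
  have direction_mem (c : Fin 2 → ℝ) (hc : c 0 ≤ 0 ∧ 0 ≤ c 1) : c ᵥ* M1 ∈ {c | 0 ≤ c 0} := by
    rw [vecMul_M1]
    exact hc.2
  refine ((h.image_mulVec M1).mono direction_mem le_rfl).of_dominating
    (XSeq_pair_succ M1 M2 b (k + 1) ▸ subset_union_left) ?_
  rintro c ⟨hc₀, hc₁⟩ _ hx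
  obtain ⟨_, rfl | rfl, y, hy, rfl⟩ := mem_XSeq_succ.1 hx
  · exact ⟨_, mem_image_of_mem _ hy, le_rfl⟩
  obtain ⟨A, hA, z, hz, rfl⟩ := mem_XSeq_succ.1 hy
  have hz₀ : 0 ≤ z := nonneg_of_mem_XSeq nonneg_of_mem_M1_M2 hb z hz
  have M2_M2_le : c ⬝ᵥ M2 *ᵥ M2 *ᵥ z ≤ c ⬝ᵥ M1 *ᵥ M1 *ᵥ z := by
    have h₀₁ := mul_nonneg (neg_nonneg.2 hc₀) (hz₀ 1)
    simp only [M1_mulVec, M2_mulVec, dotProduct, Fin.sum_univ_two, cons_val_zero, cons_val_one]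
    linarith
  have M2_M1_le : c ⬝ᵥ M2 *ᵥ M1 *ᵥ z ≤ c ⬝ᵥ M1 *ᵥ M2 *ᵥ z := by
    have h₀₀ := mul_nonneg (neg_nonneg.2 hc₀) (hz₀ 0)
    have h₁₁ := mul_nonneg hc₁ (hz₀ 1)
    simp only [M1_mulVec, M2_mulVec, dotProduct, Fin.sum_univ_two, cons_val_zero, cons_val_one]
    linarith
  obtain rfl | rfl := hA
  · exact ⟨_, mem_image_of_mem _ (mulVec_mem_XSeq_succ (.inr rfl) hz), M2_M1_le⟩
  · exact ⟨_, mem_image_of_mem _ (mulVec_mem_XSeq_succ (.inl rfl) hz), M2_M2_le⟩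

theorem exists_hasSupport_setOf_nonneg_head : ∃ K, ∀ b : Fin 2 → ℝ, 0 ≤ b → ∀ k,
    HasSupport {c | 0 ≤ c 0} (XSeq {M1, M2} b k) (K * (k + 1) ^ 2) := by
  obtain ⟨K, hK⟩ := exists_hasSupport_Ici
  refine ⟨K + 1, fun b hb k ↦ ?_⟩
  induction k using Nat.twoStepInduction with
  | zero => exact (hasSupport_XSeq_pair M1 M2 b 0).mono (subset_univ _) (by lia)
  | one => exact (hasSupport_XSeq_pair M1 M2 b 1).mono (subset_univ _) (by lia)
  | more k _ ih =>
    refine ((hK b hb (k + 2)).union_left (ih.setOf_fourth_quadrant hb)).mono (fun c hc ↦ ?_)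
      (by nlinarith)
    exact (le_total 0 (c 1)).imp (fun hc₁ ↦ Fin.forall_fin_two.2 ⟨hc, hc₁⟩) fun hc₁ ↦ ⟨hc, hc₁⟩

theorem exists_hasSupport_univ_of_nonneg : ∃ K, ∀ b : Fin 2 → ℝ, 0 ≤ b → ∀ k,
    HasSupport univ (XSeq {M1, M2} b k) (K * (k + 1) ^ 2) := by
  obtain ⟨K, hK⟩ := exists_hasSupport_setOf_nonneg_head
  refine ⟨2 * K + 8, fun b hb k ↦ ?_⟩
  obtain _ | _ | k := k
  · exact (hasSupport_XSeq_pair M1 M2 b 0).mono subset_rfl (by lia)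
  · exact (hasSupport_XSeq_pair M1 M2 b 1).mono subset_rfl (by lia)
  refine (((hK b hb (k + 2)).union_left ((hK b hb (k + 1)).setOf_second_quadrant hb)).union_left
    (hasSupport_Iic hb (k + 2))).mono (fun c _ ↦ ?_) (by ring_nf; lia)
  obtain hc₀ | hc₀ := le_total 0 (c 0)
  · exact .inl (.inl hc₀)
  obtain hc₁ | hc₁ := le_total 0 (c 1)
  · exact .inl (.inr ⟨hc₀, hc₁⟩)
  · exact .inr (Fin.forall_fin_two.2 ⟨hc₀, hc₁⟩)

theorem exists_hasSupport_univ_of_nonneg_or_nonpos : ∃ K, ∀ b : Fin 2 → ℝ, 0 ≤ b ∨ b ≤ 0 →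
    ∀ k, HasSupport univ (XSeq {M1, M2} b k) (K * (k + 1) ^ 2) := by
  obtain ⟨K, hK⟩ := exists_hasSupport_univ_of_nonneg
  refine ⟨K, fun b hb k ↦ ?_⟩
  obtain hb | hb := hb
  · exact hK b hb k
  · simpa only [XSeq_neg, neg_neg, neg_univ] using (hK (-b) (neg_nonneg.2 hb) k).neg

theorem exists_XSeq_add_two_eq (a : Fin 2 → ℝ) (k : ℕ) : ∃ e, XSeq {M1, M2} a (k + 2) =
    {e} ∪ XSeq {M1, M2} (M2 *ᵥ a) (k + 1) ∪ XSeq {M1, M2} (M2 *ᵥ M1 *ᵥ a) k := by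
  have unfold_twice (k : ℕ) : XSeq {M1, M2} a (k + 2) = XSeq {M1, M2} a k ∪
      XSeq {M1, M2} (M2 *ᵥ a) (k + 1) ∪ XSeq {M1, M2} (M2 *ᵥ M1 *ᵥ a) k := by
    rw [XSeq_pair_succ', XSeq_pair_succ' M1 M2 (M1 *ᵥ a), mulVec_mulVec, M1_mul_M1, one_mulVec,
      union_right_comm]
  induction k using Nat.twoStepInduction with
  | zero => exact ⟨a, unfold_twice 0⟩
  | one =>
    have := XSeq_subset_XSeq_add_two (M2 *ᵥ a) 0
    refine ⟨M1 *ᵥ a, ?_⟩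
    rw [unfold_twice, XSeq_pair_succ']
    change {M1 *ᵥ a} ∪ _ ∪ _ ∪ _ = _
    rw [union_assoc {_}, union_eq_right.2 this]
  | more k ih _ =>
    obtain ⟨e, he⟩ := ih
    have h₁ := XSeq_subset_XSeq_add_two (M2 *ᵥ a) (k + 1)
    have h₂ := XSeq_subset_XSeq_add_two (M2 *ᵥ M1 *ᵥ a) k
    refine ⟨e, ?_⟩
    rw [unfold_twice, he]
    grind

theorem M2_mulVec_nonneg_or_nonpos (a : Fin 2 → ℝ) :
    (0 ≤ M2 *ᵥ a ∨ M2 *ᵥ a ≤ 0) ∨ 0 ≤ M2 *ᵥ M1 *ᵥ a ∨ M2 *ᵥ M1 *ᵥ a ≤ 0 := by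
  simp only [M1_mulVec, M2_mulVec, Pi.le_def, Fin.forall_fin_two, Pi.zero_apply, cons_val_zero,
    cons_val_one]
  grind

theorem exists_hasSupport_univ : ∃ K, ∀ (a : Fin 2 → ℝ) k,
    HasSupport univ (XSeq {M1, M2} a k) (K * (k + 1) ^ 3) := by
  obtain ⟨K, hK⟩ := exists_hasSupport_univ_of_nonneg_or_nonpos
  refine ⟨K + 1, fun a k ↦ ?_⟩
  induction k using Nat.twoStepInduction generalizing a with
  | zero => exact (hasSupport_XSeq_pair M1 M2 a 0).mono subset_rfl (by lia)
  | one => exact (hasSupport_XSeq_pair M1 M2 a 1).mono subset_rfl (by lia)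
  | more k ih₀ ih₁ =>
    obtain ⟨e, he⟩ := exists_XSeq_add_two_eq a k
    rw [he]
    obtain h | h := M2_mulVec_nonneg_or_nonpos a
    · refine (((HasSupport.singleton univ e).union_right (hK _ h (k + 1))).union_right
        (ih₀ _)).mono subset_rfl ?_
      nlinarith
    · refine (((HasSupport.singleton univ e).union_right (ih₁ _)).union_right
        (hK _ h k)).mono subset_rfl ?_
      ring_nf
      lia

theorem stmt9_general : ∃ α : ℝ, 0 < α ∧ ∀ a : Fin 2 → ℝ, ∀ k : ℕ, 1 ≤ k →
    (NExt {M1, M2} a k : ℝ) ≤ α * (k : ℝ) ^ 3 := by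
  obtain ⟨K, hK⟩ := exists_hasSupport_univ
  refine ⟨8 * K + 1, by positivity, fun a k hk ↦ ?_⟩
  calc (NExt {M1, M2} a k : ℝ)
      ≤ K * (k + 1) ^ 3 := by
        exact_mod_cast (hK a k).ncard_extremePoints_convexHull_le
    _ ≤ K * (k + k) ^ 3 := by gcongr; exact_mod_cast hk
    _ ≤ (8 * K + 1) * k ^ 3 := by nlinarith [pow_nonneg (k.cast_nonneg : (0 : ℝ) ≤ k) 3]

/-- `N_k(Σ₁, a) = O(k⁴)` for `a` in the interior of the second or fourth quadrant. -/
theorem stmt9 : ∃ α : ℝ, 0 < α ∧ ∃ k₀ : ℕ, ∀ a : Fin 2 → ℝ,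
    a ∈ intQ2 ∪ intQ4 → ∀ k : ℕ, k₀ ≤ k →
      (NExt {M1, M2} a k : ℝ) ≤ α * (k : ℝ) ^ 4 := by
  obtain ⟨α, hα, h⟩ := stmt9_general
  refine ⟨α, hα, 1, fun a _ k hk ↦ (h a k hk).trans ?_⟩
  gcongr
  exacts [by exact_mod_cast hk, by norm_num]

end
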